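/- Tangency in the self-dual case: (i) Γ_k(t) = Γ_k^{(0)} + O(t) (i.e., Γ_k(t) has no pole) for every k ∈ ℤ∖{n}, and Γ_n(t) = (Γ_{n+1}^{(0)} − Γ_{n−1}^{(0)})/(4t) + Γ_n^{(0)} + O(t). (ii) If moreover Γ_k^{(0)} = 0 for all k ∈ ℤ, then Γ_k(t) = 0 as a formal Laurent series in t, for all k ∈ ℤ. -/

import Mathlib

/-!
Common definitions: the matrices `L₁`, `L₂` of the Toeplitz lattice, their powers,
the recursion polynomials `Γ_k` (here `GamA`), `Γ̃_k` (here `GamB`) and their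
self-dual version (`GamSD`), together with the notion of formal Laurent
solutions of the (self-dual) Toeplitz lattice.
-/

noncomputable section

namespace SingConf

variable {A : Type*} [CommRing A]

/-- The entry `(L₁)_{ij} = -x_i y_{j-1} + δ_{i+1,j}` (for `j - i ≤ 1`, zero otherwise). -/
def L1e (x y : ℤ → A) (i j : ℤ) : A :=
  if j ≤ i + 1 then -(x i * y (j - 1)) + (if i + 1 = j then 1 else 0) else 0

/-- The entry `(L₂)_{ij} = -y_j x_{i-1} + δ_{j+1,i}` (for `j - i ≥ -1`, zero otherwise). -/
def L2e (x y : ℤ → A) (i j : ℤ) : A :=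
  if i ≤ j + 1 then -(y j * x (i - 1)) + (if j + 1 = i then 1 else 0) else 0

/-- The entry `(L₁^s)_{ij}`; the matrix `L₁` has upper bandwidth 1, so each entry of a
power is a finite sum. -/
def L1pow (x y : ℤ → A) : ℕ → ℤ → ℤ → A
  | 0 => fun i j => if i = j then 1 else 0
  | s + 1 => fun i j => ∑ l ∈ Finset.Icc (j - 1) (i + (s : ℤ)), L1pow x y s i l * L1e x y l j

/-- The entry `(L₂^s)_{ij}`. -/
def L2pow (x y : ℤ → A) : ℕ → ℤ → ℤ → A
  | 0 => fun i j => if i = j then 1 else 0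
  | s + 1 => fun i j => ∑ l ∈ Finset.Icc (i - (s : ℤ)) (j + 1), L2pow x y s i l * L2e x y l j

/-- The recursion polynomial
`Γ_k(x,y;u) = (v_k/y_k)(-(L₁P₁'(L₁))_{k+1,k+1} - (L₂P₂'(L₂))_{k,k}
              + (P₁'(L₁))_{k+1,k} + (P₂'(L₂))_{k,k+1}) + k x_k`
where `P₁(λ) = ∑_{i=1}^N u_i λ^i/i`, `P₂(λ) = ∑_{i=1}^N u_{-i} λ^i/i`, `v_k = 1 - x_k y_k`.
The apparent denominator `y_k` cancels, thanks to the identities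
`(L₁^{i-1})_{k+1,k} - (L₁^i)_{k+1,k+1} = y_k ∑_{l} x_l (L₁^{i-1})_{k+1,l}` and
`(L₂^{i-1})_{k,k+1} - (L₂^i)_{k,k} = y_k ∑_{l} x_{l-1} (L₂^{i-1})_{k,l}`,
which is how the cancellation-free expression below is obtained. -/
def GamA (N : ℕ) (u : ℤ → A) (x y : ℤ → A) (k : ℤ) : A :=
  (1 - x k * y k) *
    ((∑ i ∈ Finset.Icc 1 N, u (i : ℤ) *
        ∑ l ∈ Finset.Icc k (k + (i : ℤ)), x l * L1pow x y (i - 1) (k + 1) l) +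
      ∑ i ∈ Finset.Icc 1 N, u (-(i : ℤ)) *
        ∑ l ∈ Finset.Icc (k - (i : ℤ) + 1) (k + 1), x (l - 1) * L2pow x y (i - 1) k l) +
  (k : A) * x k

/-- The recursion polynomial
`Γ̃_k(x,y;u) = (v_k/x_k)(-(L₁P₁'(L₁))_{k,k} - (L₂P₂'(L₂))_{k+1,k+1}
              + (P₁'(L₁))_{k+1,k} + (P₂'(L₂))_{k,k+1}) + k y_k`,
written in cancellation-free form using
`(L₁^{i-1})_{k+1,k} - (L₁^i)_{k,k} = x_k ∑_{l} y_{l-1} (L₁^{i-1})_{l,k}` and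
`(L₂^{i-1})_{k,k+1} - (L₂^i)_{k+1,k+1} = x_k ∑_{l} y_l (L₂^{i-1})_{l,k+1}`. -/
def GamB (N : ℕ) (u : ℤ → A) (x y : ℤ → A) (k : ℤ) : A :=
  (1 - x k * y k) *
    ((∑ i ∈ Finset.Icc 1 N, u (i : ℤ) *
        ∑ l ∈ Finset.Icc (k - (i : ℤ) + 1) (k + 1), y (l - 1) * L1pow x y (i - 1) l k) +
      ∑ i ∈ Finset.Icc 1 N, u (-(i : ℤ)) *
        ∑ l ∈ Finset.Icc k (k + (i : ℤ)), y l * L2pow x y (i - 1) l (k + 1)) +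
  (k : A) * y k

/-- The self-dual recursion polynomial
`Γ_k(x;u) = (v_k/x_k)(2(P'(L))_{k+1,k} - (LP'(L))_{k+1,k+1} - (LP'(L))_{k,k}) + k x_k`
(where `L = L₁` with `y = x`, `v_k = 1 - x_k²`), in cancellation-free form. -/
def GamSD (N : ℕ) (u : ℕ → A) (x : ℤ → A) (k : ℤ) : A :=
  (1 - x k * x k) *
    (∑ i ∈ Finset.Icc 1 N, u i *
      ((∑ l ∈ Finset.Icc k (k + (i : ℤ)), x l * L1pow x x (i - 1) (k + 1) l) +
        ∑ l ∈ Finset.Icc (k - (i : ℤ) + 1) (k + 1), x (l - 1) * L1pow x x (i - 1) l k)) +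
  (k : A) * x k

variable {K : Type*} [Field K]

/-- `f(t) = O(t^m)` for a formal Laurent series. -/
def BigO (f : LaurentSeries K) (m : ℤ) : Prop := ∀ i < m, f.coeff i = 0

/-- A family `x(t) = (x_k(t))_{k ∈ ℤ}` of formal Laurent series is a solution of the first
vector field of the self-dual Toeplitz lattice: `dx_k/dt = (1 - x_k²)(x_{k+1} - x_{k-1})`;
stated coefficientwise (the coefficient of `t^m` in `dx_k/dt` is `(m+1)·x_k^{(m+1)}`). -/
def IsSolSD (x : ℤ → LaurentSeries K) : Prop :=
  ∀ k m : ℤ, ((m + 1 : ℤ) : K) * (x k).coeff (m + 1) =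
    ((1 - x k * x k) * (x (k + 1) - x (k - 1))).coeff m

/-- A family `(x_k(t), y_k(t))_{k ∈ ℤ}` of formal Laurent series is a solution of the first
Toeplitz vector field: `dx_k/dt = (1 - x_k y_k)(x_{k+1} - x_{k-1})`,
`dy_k/dt = (1 - x_k y_k)(y_{k+1} - y_{k-1})`. -/
def IsSolT (x y : ℤ → LaurentSeries K) : Prop :=
  ∀ k m : ℤ,
    ((m + 1 : ℤ) : K) * (x k).coeff (m + 1) =
      ((1 - x k * y k) * (x (k + 1) - x (k - 1))).coeff m ∧
    ((m + 1 : ℤ) : K) * (y k).coeff (m + 1) =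
      ((1 - x k * y k) * (y (k + 1) - y (k - 1))).coeff m

end SingConf

open SingConf


section Abstract

variable {A : Type*} [CommRing A]

/-- right partial sums -/
def aS (x : ℤ → A) (s : ℕ) (i k : ℤ) : A :=
  ∑ l ∈ Finset.Icc k (i + (s : ℤ)), x l * L1pow x x s i l

/-- left partial sums -/
def bS (x : ℤ → A) (s : ℕ) (k j : ℤ) : A :=
  ∑ l ∈ Finset.Icc (j - (s : ℤ)) (k + 1), x (l - 1) * L1pow x x s l j

/-- double partial sums -/
def cS (x : ℤ → A) (s : ℕ) (i k : ℤ) : A :=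
  ∑ l ∈ Finset.Icc k (i + 1 + (s : ℤ)), bS x s i l * x l

theorem Icc_bot {M : Type*} [AddCommMonoid M] (f : ℤ → M) (a b : ℤ) (h : a ≤ b) :
    ∑ l ∈ Finset.Icc a b, f l = f a + ∑ l ∈ Finset.Icc (a + 1) b, f l := by
  have : Finset.Icc a b = insert a (Finset.Icc (a + 1) b) := by
    ext l; simp only [Finset.mem_Icc, Finset.mem_insert]; omega
  rw [this, Finset.sum_insert (by simp)]

theorem Icc_top {M : Type*} [AddCommMonoid M] (f : ℤ → M) (a b : ℤ) (h : a ≤ b) :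
    ∑ l ∈ Finset.Icc a b, f l = f b + ∑ l ∈ Finset.Icc a (b - 1), f l := by
  have : Finset.Icc a b = insert b (Finset.Icc a (b - 1)) := by
    ext l; simp only [Finset.mem_Icc, Finset.mem_insert]; omega
  rw [this, Finset.sum_insert (by simp)]

theorem down_ind (P : ℤ → Prop) (B : ℤ) (h0 : ∀ k, B ≤ k → P k)
    (hs : ∀ k, P (k + 1) → P k) (k : ℤ) : P k := by
  have key : ∀ m : ℕ, ∀ k, B ≤ k + m → P k := by
    intro m
    induction m with
    | zero => intro k hk; exact h0 k (by simpa using hk)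
    | succ m ih => intro k hk; exact hs k (ih (k + 1) (by push_cast at hk; omega))
  exact key (B - k).toNat k (by omega)

theorem up_ind (P : ℤ → Prop) (B : ℤ) (h0 : ∀ k, k ≤ B → P k)
    (hs : ∀ k, P (k - 1) → P k) (k : ℤ) : P k := by
  have key : ∀ m : ℕ, ∀ k, k ≤ B + m → P k := by
    intro m
    induction m with
    | zero => intro k hk; exact h0 k (by simpa using hk)
    | succ m ih => intro k hk; exact hs k (ih (k - 1) (by push_cast at hk; omega))
  exact key (k - B).toNat k (by omega)

theorem Q_zero (x : ℤ → A) (s : ℕ) (i j : ℤ) (h : i + s < j) : L1pow x x s i j = 0 := by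
  cases s with
  | zero => simp only [L1pow]; rw [if_neg]; push_cast at h; omega
  | succ s =>
    simp only [L1pow]
    rw [Finset.Icc_eq_empty (by push_cast at h; omega), Finset.sum_empty]

theorem a_zero (x : ℤ → A) (s : ℕ) (i k : ℤ) (h : i + s < k) : aS x s i k = 0 := by
  rw [aS, Finset.Icc_eq_empty (by omega), Finset.sum_empty]

theorem b_zero (x : ℤ → A) (s : ℕ) (k j : ℤ) (h : k + 1 < j - s) : bS x s k j = 0 := by
  rw [bS, Finset.Icc_eq_empty (by omega), Finset.sum_empty]

theorem c_zero (x : ℤ → A) (s : ℕ) (i k : ℤ) (h : i + 1 + s < k) : cS x s i k = 0 := by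
  rw [cS, Finset.Icc_eq_empty (by omega), Finset.sum_empty]

theorem a_step (x : ℤ → A) (s : ℕ) (i k : ℤ) :
    aS x s i k = aS x s i (k + 1) + x k * L1pow x x s i k := by
  by_cases h : k ≤ i + s
  · rw [aS, Icc_bot _ _ _ h, aS, add_comm]
  · rw [a_zero x s i k (by omega), a_zero x s i (k + 1) (by omega), Q_zero x s i k (by omega)]
    ring

theorem b_step (x : ℤ → A) (s : ℕ) (k j : ℤ) :
    bS x s k j = bS x s (k - 1) j + x k * L1pow x x s (k + 1) j := by
  by_cases h : j - s ≤ k + 1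
  · rw [bS, Icc_top _ _ _ h, bS, add_comm]
    simp
  · rw [b_zero x s k j (by omega), b_zero x s (k - 1) j (by omega), Q_zero x s (k + 1) j (by omega)]
    ring

theorem c_step (x : ℤ → A) (s : ℕ) (i k : ℤ) :
    cS x s i k = cS x s i (k + 1) + bS x s i k * x k := by
  by_cases h : k ≤ i + 1 + s
  · rw [cS, Icc_bot _ _ _ h, cS, add_comm]
  · rw [c_zero x s i k (by omega), c_zero x s i (k + 1) (by omega), b_zero x s i k (by omega)]
    ring

theorem c_step' (x : ℤ → A) (s : ℕ) (i k : ℤ) :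
    cS x s i k = cS x s (i - 1) k + x i * aS x s (i + 1) k := by
  refine down_ind (fun k => cS x s i k = cS x s (i - 1) k + x i * aS x s (i + 1) k)
    (i + 2 + s) ?_ ?_ k
  · intro k hk
    rw [c_zero x s i k (by omega), c_zero x s (i - 1) k (by omega), a_zero x s (i + 1) k (by omega)]
    ring
  · intro k hk
    rw [c_step x s i k, c_step x s (i - 1) k, a_step x s (i + 1) k, hk, b_step x s i k]
    ring

theorem Q_right (x : ℤ → A) (s : ℕ) (i j : ℤ) :
    L1pow x x (s + 1) i (j + 1) = L1pow x x s i j - x j * aS x s i j := by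
  by_cases h : j ≤ i + s
  · simp only [L1pow, add_sub_cancel_right]
    rw [Icc_bot _ _ _ h, a_step, aS, mul_add, Finset.mul_sum]
    have : ∀ l ∈ Finset.Icc (j + 1) (i + (s : ℤ)), L1pow x x s i l * L1e x x l (j + 1)
        = - (x j * (x l * L1pow x x s i l)) := by
      intro l hl
      rw [Finset.mem_Icc] at hl
      rw [L1e, if_pos (by omega), if_neg (by omega)]
      simp only [add_sub_cancel_right]
      ring
    rw [Finset.sum_congr rfl this, Finset.sum_neg_distrib, L1e, if_pos le_rfl, if_pos rfl]
    simp only [add_sub_cancel_right]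
    ring
  · rw [Q_zero x (s + 1) i (j + 1) (by push_cast; omega), Q_zero x s i j (by omega),
      a_zero x s i j (by omega)]
    ring

theorem Q_right' (x : ℤ → A) (s : ℕ) (i j : ℤ) :
    L1pow x x (s + 1) i j = L1pow x x s i (j - 1) - x (j - 1) * aS x s i (j - 1) := by
  have := Q_right x s i (j - 1)
  simpa using this

theorem Q_left (x : ℤ → A) (s : ℕ) : ∀ i j : ℤ,
    L1pow x x (s + 1) i j = L1pow x x s (i + 1) j - x i * bS x s i j := by
  induction s with
  | zero =>
    intro i j
    rw [Q_right']
    simp only [L1pow, aS, bS]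
    simp only [mul_ite, mul_one, mul_zero, Finset.sum_ite_eq, Finset.sum_ite_eq',
      Finset.mem_Icc, Nat.cast_zero, add_zero, sub_zero, le_refl, true_and, and_true]
    split_ifs <;> first | omega | ring
  | succ s ih =>
    have ha : ∀ i k, aS x (s + 1) i k = aS x s (i + 1) k - x i * cS x s i k := by
      intro i k
      refine down_ind (fun k => aS x (s + 1) i k = aS x s (i + 1) k - x i * cS x s i k)
        (i + 2 + s) ?_ ?_ k
      · intro k hk
        rw [a_zero x (s + 1) i k (by push_cast; omega), a_zero x s (i + 1) k (by omega),
          c_zero x s i k (by omega)]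
        ring
      · intro k hk
        rw [a_step, a_step x s, c_step, hk, ih]
        ring
    have hb : ∀ i j, bS x (s + 1) i j = bS x s i (j - 1) - x (j - 1) * cS x s i (j - 1) := by
      intro i j
      refine up_ind (fun i => bS x (s + 1) i j = bS x s i (j - 1) - x (j - 1) * cS x s i (j - 1))
        (j - s - 3) ?_ ?_ i
      · intro k hk
        rw [b_zero x (s + 1) k j (by push_cast; omega), b_zero x s k (j - 1) (by omega),
          c_zero x s k (j - 1) (by omega)]
        ring
      · intro k hk
        rw [b_step, b_step x s, c_step', hk, Q_right']
        ring
    intro i j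
    rw [Q_right' x (s + 1), ih, ha, hb, Q_right']
    ring

theorem D_one (D : A →+ A) (hD : ∀ a b, D (a * b) = D a * b + a * D b) : D 1 = 0 := by
  have := hD 1 1
  simpa using this

/-- The commutator formula. -/
def QF (x : ℤ → A) (s : ℕ) (i j : ℤ) : A :=
  (1 - x i * x i) * L1pow x x s (i + 1) j + x i * x (i - 1) * L1pow x x s i j
    - L1pow x x s (i - 1) j - L1pow x x s i (j - 1) * (1 - x (j - 1) * x (j - 1))
    - L1pow x x s i j * (x j * x (j - 1)) + L1pow x x s i (j + 1)

theorem D_a (D : A →+ A) (hD : ∀ a b, D (a * b) = D a * b + a * D b)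
    (x : ℤ → A) (hx : ∀ k, D (x k) = (1 - x k * x k) * (x (k + 1) - x (k - 1)))
    (s : ℕ) (hQ : ∀ i j, D (L1pow x x s i j) = QF x s i j) (j k : ℤ) :
    D (aS x s j k) = (1 - x j * x j) * aS x s (j + 1) k + x j * x (j - 1) * aS x s j k
      - aS x s (j - 1) k - x k * (1 - x (k - 1) * x (k - 1)) * L1pow x x s j (k - 1)
      - x (k - 1) * L1pow x x s j k := by
  refine down_ind (fun k => D (aS x s j k) = (1 - x j * x j) * aS x s (j + 1) k
      + x j * x (j - 1) * aS x s j k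
      - aS x s (j - 1) k - x k * (1 - x (k - 1) * x (k - 1)) * L1pow x x s j (k - 1)
      - x (k - 1) * L1pow x x s j k) (j + s + 2) ?_ ?_ k
  · intro k hk
    rw [a_zero x s j k (by omega), a_zero x s (j + 1) k (by omega), a_zero x s (j - 1) k (by omega),
      Q_zero x s j (k - 1) (by omega), Q_zero x s j k (by omega), map_zero]
    ring
  · intro k hk
    rw [a_step x s j k, a_step x s (j + 1) k, a_step x s (j - 1) k, map_add, hk, hD, hx, hQ, QF]
    simp only [add_sub_cancel_right]
    ring

theorem D_b (D : A →+ A) (hD : ∀ a b, D (a * b) = D a * b + a * D b)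
    (x : ℤ → A) (hx : ∀ k, D (x k) = (1 - x k * x k) * (x (k + 1) - x (k - 1)))
    (s : ℕ) (hQ : ∀ i j, D (L1pow x x s i j) = QF x s i j) (k j : ℤ) :
    D (bS x s k j) = - bS x s k (j - 1) * (1 - x (j - 1) * x (j - 1))
      - bS x s k j * (x j * x (j - 1)) + bS x s k (j + 1)
      + x k * (1 - x (k + 1) * x (k + 1)) * L1pow x x s (k + 2) j
      + x (k + 1) * L1pow x x s (k + 1) j := by
  refine up_ind (fun k => D (bS x s k j) = - bS x s k (j - 1) * (1 - x (j - 1) * x (j - 1))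
      - bS x s k j * (x j * x (j - 1)) + bS x s k (j + 1)
      + x k * (1 - x (k + 1) * x (k + 1)) * L1pow x x s (k + 2) j
      + x (k + 1) * L1pow x x s (k + 1) j) (j - s - 3) ?_ ?_ k
  · intro k hk
    rw [b_zero x s k (j - 1) (by omega), b_zero x s k j (by omega), b_zero x s k (j + 1) (by omega),
      Q_zero x s (k + 2) j (by omega), Q_zero x s (k + 1) j (by omega), map_zero]
    ring
  · intro k hk
    rw [b_step x s k j, b_step x s k (j - 1), b_step x s k (j + 1), map_add, hk, hD, hx, hQ, QF]
    simp only [add_sub_cancel_right, sub_add_cancel]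
    rw [show k - 1 + 2 = k + 1 by ring, show k + 1 + 1 = k + 2 by ring]
    ring

theorem D_Q (D : A →+ A) (hD : ∀ a b, D (a * b) = D a * b + a * D b)
    (x : ℤ → A) (hx : ∀ k, D (x k) = (1 - x k * x k) * (x (k + 1) - x (k - 1)))
    (s : ℕ) : ∀ i j, D (L1pow x x s i j) = QF x s i j := by
  induction s with
  | zero =>
    intro i j
    have h1 := D_one D hD
    rw [QF]
    simp only [L1pow]
    rcases eq_or_ne i j with rfl | h
    · rw [if_pos rfl, h1, if_neg (by omega), if_neg (by omega), if_neg (by omega),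
        if_neg (by omega)]
      ring
    · rw [if_neg h, map_zero]
      by_cases h2 : i + 1 = j
      · subst h2
        rw [if_pos rfl, if_neg (by omega), if_pos (by omega), if_neg (by omega)]
        simp
      · by_cases h3 : i - 1 = j
        · subst h3
          rw [if_neg (by omega), if_pos (by omega), if_neg (by omega), if_pos (by omega)]
          simp
        · rw [if_neg (by omega), if_neg (by omega), if_neg (by omega), if_neg (by omega)]
          simp
  | succ s ih =>
    intro i j
    obtain ⟨j, rfl⟩ : ∃ j', j = j' + 1 := ⟨j - 1, by ring⟩
    rw [QF]
    have e1 := Q_right x s i (j - 1)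
    simp only [sub_add_cancel] at e1
    have e2 := a_step x s i (j - 1)
    simp only [sub_add_cancel] at e2
    have e3 := a_step x s i j
    simp only [add_sub_cancel_right]
    rw [Q_right, Q_right, Q_right, Q_right, e1, map_sub, hD, ih, hx,
      D_a D hD x hx s ih, QF, e2, e3]
    ring

theorem D_W (D : A →+ A) (hD : ∀ a b, D (a * b) = D a * b + a * D b)
    (x : ℤ → A) (hx : ∀ k, D (x k) = (1 - x k * x k) * (x (k + 1) - x (k - 1)))
    (s : ℕ) (k : ℤ) :
    D ((1 - x k * x k) * (aS x s (k + 1) k + bS x s k k)) = (1 - x k * x k) *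
      ((1 - x (k + 1) * x (k + 1)) * (aS x s (k + 1 + 1) (k + 1) + bS x s (k + 1) (k + 1)) -
       (1 - x (k - 1) * x (k - 1)) * (aS x s (k - 1 + 1) (k - 1) + bS x s (k - 1) (k - 1))) := by
  have hQ := D_Q D hD x hx s
  rw [hD, map_sub, D_one D hD, hD, hx, map_add, D_a D hD x hx s hQ, D_b D hD x hx s hQ]
  simp only [add_sub_cancel_right, sub_add_cancel]
  rw [show k + 1 + 1 = k + 2 by ring]
  have a1 := a_step x s (k + 2) k
  have a2 := a_step x s k (k - 1)
  have a3 := a_step x s (k + 1) (k - 1)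
  have b1 := b_step x s k (k - 1)
  have b2 := b_step x s (k + 1) (k + 1)
  have b3 := b_step x s (k + 1) k
  simp only [add_sub_cancel_right, sub_add_cancel] at a1 a2 a3 b1 b2 b3
  rw [show k + 1 + 1 = k + 2 by ring] at b2 b3
  -- the entries of the next power
  have r1 := Q_right x s (k + 1) k
  have l1 := Q_left x s (k + 1) (k + 1)
  have r2 := Q_right' x s k k
  have l2 := Q_left x s k k
  have r3 := Q_right' x s (k + 1) k
  have l3 := Q_left x s (k + 1) k
  rw [show k + 1 + 1 = k + 2 by ring] at l1 l3
  have E1 := r1.symm.trans l1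
  have E2 := r2.symm.trans l2
  have E3 := r3.symm.trans l3
  rw [a2] at E2
  rw [b2] at E1
  rw [a3, b3] at E3
  rw [a1, a2, b1, b2]
  linear_combination (1 - x k * x k) * (x (k + 1) * E1 + x (k - 1) * E2 - 2 * x k * E3)

end Abstract

theorem D_Gam {A : Type*} [CommRing A] (D : A →+ A) (hD : ∀ a b, D (a * b) = D a * b + a * D b)
    (x : ℤ → A) (hx : ∀ k, D (x k) = (1 - x k * x k) * (x (k + 1) - x (k - 1)))
    (N : ℕ) (hN : 1 ≤ N) (u : ℕ → A) (hu : ∀ i, D (u i) = if i = 1 then 1 else 0)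
    (hk : ∀ k : ℤ, D (k : A) = 0) (k : ℤ) :
    D (GamSD N u x k) = (1 - x k * x k) * (GamSD N u x (k + 1) - GamSD N u x (k - 1)) := by
  have key : ∀ k : ℤ, GamSD N u x k = (∑ i ∈ Finset.Icc 1 N, u i *
      ((1 - x k * x k) * (aS x (i - 1) (k + 1) k + bS x (i - 1) k k))) + (k : A) * x k := by
    intro k
    rw [GamSD, Finset.mul_sum]
    congr 1
    refine Finset.sum_congr rfl fun i hi => ?_
    rw [Finset.mem_Icc] at hi
    rw [aS, bS, show k + 1 + ((i - 1 : ℕ) : ℤ) = k + i by omega,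
      show k - ((i - 1 : ℕ) : ℤ) = k - i + 1 by omega]
    ring
  have e1 : aS x 0 (k + 1) k + bS x 0 k k = x (k + 1) + x (k - 1) := by
    simp only [L1pow, aS, bS]
    simp
  have hs : ∀ i ∈ Finset.Icc 1 N, D (u i *
      ((1 - x k * x k) * (aS x (i - 1) (k + 1) k + bS x (i - 1) k k))) =
      (if i = 1 then (1 - x k * x k) * (x (k + 1) + x (k - 1)) else 0) +
      (1 - x k * x k) * (
        u i * ((1 - x (k + 1) * x (k + 1)) * (aS x (i - 1) (k + 1 + 1) (k + 1)
          + bS x (i - 1) (k + 1) (k + 1))) -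
        u i * ((1 - x (k - 1) * x (k - 1)) * (aS x (i - 1) (k - 1 + 1) (k - 1)
          + bS x (i - 1) (k - 1) (k - 1)))) := by
    intro i _
    rw [hD, hu, D_W D hD x hx]
    split_ifs with h
    · subst h
      rw [Nat.sub_self, e1]
      ring
    · ring
  rw [key, key, key, map_add, map_sum, Finset.sum_congr rfl hs, Finset.sum_add_distrib,
    ← Finset.mul_sum, Finset.sum_sub_distrib, hD, hk, hx, Finset.sum_ite_eq',
    if_pos (Finset.mem_Icc.2 ⟨le_rfl, hN⟩)]
  push_cast
  ring

section Laurent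

variable {K : Type*} [Field K]

/-- Euler operator -/
def theta : LaurentSeries K →+ LaurentSeries K where
  toFun f :=
    { coeff := fun m => (m : K) * f.coeff m
      isPWO_support' := f.isPWO_support.mono (fun m hm => by
        simp only [Function.mem_support, HahnSeries.mem_support] at hm ⊢
        exact right_ne_zero_of_mul hm) }
  map_zero' := by ext m; simp
  map_add' f g := by ext m; simp [mul_add]

theorem theta_coeff (f : LaurentSeries K) (m : ℤ) : (theta f).coeff m = (m : K) * f.coeff m := rfl

theorem theta_supp (f : LaurentSeries K) : (theta f).support ⊆ f.support := fun m hm => by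
  simp only [HahnSeries.mem_support, theta_coeff] at hm ⊢
  exact right_ne_zero_of_mul hm

theorem theta_mul (f g : LaurentSeries K) : theta (f * g) = theta f * g + f * theta g := by
  ext m
  rw [theta_coeff, HahnSeries.coeff_add, HahnSeries.coeff_mul,
    HahnSeries.coeff_mul_left' f.isPWO_support (theta_supp f),
    HahnSeries.coeff_mul_right' g.isPWO_support (theta_supp g), Finset.mul_sum,
    ← Finset.sum_add_distrib]
  refine Finset.sum_congr rfl fun ij hij => ?_
  have h := (Finset.mem_antidiagonal.1 hij).2.2
  rw [theta_coeff, theta_coeff, ← h]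
  push_cast
  ring

/-- derivative -/
def dd : LaurentSeries K →+ LaurentSeries K :=
  (AddMonoidHom.mulLeft (HahnSeries.single (-1 : ℤ) (1 : K) : LaurentSeries K)).comp theta

theorem dd_apply (f : LaurentSeries K) :
    dd f = (HahnSeries.single (-1 : ℤ) (1 : K) : LaurentSeries K) * theta f := rfl

theorem dd_coeff (f : LaurentSeries K) (m : ℤ) :
    (dd f).coeff m = ((m + 1 : ℤ) : K) * f.coeff (m + 1) := by
  rw [dd_apply, HahnSeries.coeff_single_mul, theta_coeff]
  simp

theorem dd_mul (f g : LaurentSeries K) : dd (f * g) = dd f * g + f * dd g := by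
  simp only [dd_apply, theta_mul]
  ring

theorem bo_mul {f g : LaurentSeries K} {a b : ℤ} (hf : BigO f a) (hg : BigO g b) :
    BigO (f * g) (a + b) := by
  intro i hi
  rw [HahnSeries.coeff_mul]
  refine Finset.sum_eq_zero fun ij hij => ?_
  have h := (Finset.mem_antidiagonal.1 hij).2.2
  by_cases h1 : ij.1 < a
  · rw [hf _ h1, zero_mul]
  · rw [hg _ (by omega), mul_zero]

theorem bo_lead {f g : LaurentSeries K} {a b : ℤ} (hf : BigO f a) (hg : BigO g b) :
    (f * g).coeff (a + b) = f.coeff a * g.coeff b := by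
  rw [HahnSeries.coeff_mul]
  by_cases hab : f.coeff a * g.coeff b = 0
  · rw [hab]
    refine Finset.sum_eq_zero fun ij hij => ?_
    have h := (Finset.mem_antidiagonal.1 hij).2.2
    by_cases h1 : ij.1 < a
    · rw [hf _ h1, zero_mul]
    · by_cases h2 : ij.2 < b
      · rw [hg _ h2, mul_zero]
      · have e1 : ij.1 = a := by omega
        have e2 : ij.2 = b := by omega
        rw [e1, e2, hab]
  · rw [Finset.sum_eq_single (a, b)]
    · intro ij hij hne
      have h := (Finset.mem_antidiagonal.1 hij).2.2
      by_cases h1 : ij.1 < a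
      · rw [hf _ h1, zero_mul]
      · by_cases h2 : ij.2 < b
        · rw [hg _ h2, mul_zero]
        · exact absurd (Prod.ext (by simp; omega) (by simp; omega)) hne
    · intro hn
      exfalso
      apply hn
      rw [Finset.mem_antidiagonal]
      exact ⟨left_ne_zero_of_mul hab, right_ne_zero_of_mul hab, rfl⟩

theorem bo_add {f g : LaurentSeries K} {a : ℤ} (hf : BigO f a) (hg : BigO g a) :
    BigO (f + g) a := fun i hi => by rw [HahnSeries.coeff_add, hf i hi, hg i hi, add_zero]

theorem bo_neg {f : LaurentSeries K} {a : ℤ} (hf : BigO f a) :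
    BigO (-f) a := fun i hi => by rw [HahnSeries.coeff_neg, hf i hi, neg_zero]

theorem bo_sub {f g : LaurentSeries K} {a : ℤ} (hf : BigO f a) (hg : BigO g a) :
    BigO (f - g) a := fun i hi => by rw [HahnSeries.coeff_sub, hf i hi, hg i hi, sub_zero]

theorem bo_zero (a : ℤ) : BigO (0 : LaurentSeries K) a := fun i _ => HahnSeries.coeff_zero

theorem bo_C (c : K) : BigO (HahnSeries.C c : LaurentSeries K) 0 := fun i hi => by
  rw [HahnSeries.C_apply, HahnSeries.coeff_single_of_ne (by omega)]

theorem bo_one : BigO (1 : LaurentSeries K) 0 := by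
  have := bo_C (1 : K)
  rwa [map_one] at this

theorem int_C (k : ℤ) : ((k : LaurentSeries K)) = HahnSeries.C (k : K) := by
  rw [map_intCast]

theorem bo_mono {f : LaurentSeries K} {a b : ℤ} (hf : BigO f a) (h : b ≤ a) : BigO f b :=
  fun i hi => hf i (by omega)

theorem bo_sum {ι : Type*} (s : Finset ι) (f : ι → LaurentSeries K) (a : ℤ)
    (h : ∀ i ∈ s, BigO (f i) a) : BigO (∑ i ∈ s, f i) a := by
  classical
  induction s using Finset.induction_on with
  | empty => exact bo_zero a
  | insert i s hi ih =>
    rw [Finset.sum_insert hi]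
    exact bo_add (h _ (Finset.mem_insert_self _ _))
      (ih fun j hj => h j (Finset.mem_insert_of_mem hj))

theorem bo_succ {f : LaurentSeries K} {a : ℤ} (hf : BigO f a) (h : f.coeff a = 0) :
    BigO f (a + 1) := fun i hi => by
  rcases eq_or_ne i a with rfl | h'
  · exact h
  · exact hf i (by omega)

theorem bo_mul0 {f g : LaurentSeries K} (hf : BigO f 0) (hg : BigO g 0) : BigO (f * g) 0 :=
  bo_mul hf hg

/-- derivative raises -/
theorem bo_of_dd [CharZero K] {f : LaurentSeries K} {a b : ℤ} (hf : BigO (dd f) a) (hb : b ≤ a + 1)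
    (h : ∀ i < b, i = 0 → f.coeff i = 0) :
    BigO f b := fun i hi => by
  rcases eq_or_ne i 0 with h0 | h0
  · exact h i hi h0
  · have := hf (i - 1) (by omega)
    rw [dd_coeff, sub_add_cancel] at this
    exact (mul_eq_zero.1 this).resolve_left (by exact_mod_cast h0)

theorem bo_dd {f : LaurentSeries K} (hf : BigO f 0) : BigO (dd f) 0 := fun i hi => by
  rw [dd_coeff]
  rcases eq_or_ne i (-1) with rfl | h
  · simp
  · rw [hf _ (by omega), mul_zero]

/-- division by a unit -/
theorem bo_div {f g : LaurentSeries K} (hf : BigO f 0) (hf0 : f.coeff 0 ≠ 0)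
    (hfg : BigO (f * g) 0) : BigO g 0 := by
  by_contra hg
  have hg0 : g ≠ 0 := by rintro rfl; exact hg (bo_zero 0)
  have ho : BigO g g.order := fun i hi => HahnSeries.coeff_eq_zero_of_lt_order hi
  have hlt : g.order < 0 := by
    by_contra h
    exact hg (bo_mono ho (by omega))
  have h1 := bo_lead hf ho
  rw [hfg _ (by omega)] at h1
  have h2 : g.coeff g.order ≠ 0 := by
    rw [HahnSeries.coeff_order_eq_zero.ne]; exact hg0
  exact mul_ne_zero hf0 h2 h1.symm

theorem bo_Q (x : ℤ → LaurentSeries K) (a b : ℤ) (hx : ∀ m, a ≤ m → m ≤ b → BigO (x m) 0)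
    (s : ℕ) : ∀ i j : ℤ, a ≤ j - s → i + s ≤ b → BigO (L1pow x x s i j) 0 := by
  induction s with
  | zero =>
    intro i j _ _
    simp only [L1pow]
    split_ifs
    · exact bo_one
    · exact bo_zero 0
  | succ s ih =>
    intro i j hj hi
    push_cast at hj hi
    simp only [L1pow]
    refine bo_sum _ _ _ fun l hl => ?_
    rw [Finset.mem_Icc] at hl
    refine bo_mul0 (ih i l (by omega) (by omega)) ?_
    rw [L1e]
    split_ifs
    · exact bo_add (bo_neg (bo_mul0 (hx _ (by omega) (by omega)) (hx _ (by omega) (by omega))))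
        bo_one
    · exact bo_add (bo_neg (bo_mul0 (hx _ (by omega) (by omega)) (hx _ (by omega) (by omega))))
        (bo_zero 0)
    · exact bo_zero 0

theorem bo_Gam (x : ℤ → LaurentSeries K) (N : ℕ) (u : ℕ → LaurentSeries K)
    (hu : ∀ i, BigO (u i) 0) (k : ℤ)
    (hx : ∀ m, k - N ≤ m → m ≤ k + N → BigO (x m) 0) : BigO (GamSD N u x k) 0 := by
  rw [GamSD]
  refine bo_add (bo_mul0 (bo_sub bo_one (bo_mul0 (hx k (by omega) (by omega))
    (hx k (by omega) (by omega)))) (bo_sum _ _ _ fun i hi => bo_mul0 (hu i) (bo_add ?_ ?_))) ?_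
  · rw [Finset.mem_Icc] at hi
    refine bo_sum _ _ _ fun l hl => ?_
    rw [Finset.mem_Icc] at hl
    exact bo_mul0 (hx l (by omega) (by omega)) (bo_Q x _ _ hx _ _ _ (by omega) (by omega))
  · rw [Finset.mem_Icc] at hi
    refine bo_sum _ _ _ fun l hl => ?_
    rw [Finset.mem_Icc] at hl
    exact bo_mul0 (hx _ (by omega) (by omega)) (bo_Q x _ _ hx _ _ _ (by omega) (by omega))
  · rw [int_C]
    exact bo_mul0 (bo_C _) (hx k (by omega) (by omega))

end Laurent

/-- tangency, self-dual case. Let `x(t)` be a formal Laurent solution of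
the self-dual Toeplitz lattice over a field `F` of characteristic `0`, with only `x_n(t)`
having a (simple) pole, `x_n(t) = -ε/(2t) + O(1)`, `x_{n±1}(t) = ∓ε + O(t)` and
`x_k(t) = a_k + O(t)` with `a_k² ≠ 1` for `|k - n| ≥ 2`. Set `Γ_k(t) := Γ_k(x(t); u(t))`
with `u(t) = (u_1 + t, u_2, …, u_N)`. Then: (i) `Γ_k(t)` has no pole for `k ≠ n`, and
`Γ_n(t) = (Γ_{n+1}^{(0)} - Γ_{n-1}^{(0)})/(4t) + O(1)`; (ii) if `Γ_k^{(0)} = 0` for all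
`k`, then `Γ_k(t) = 0` identically, for all `k`. -/
theorem statement5 (F : Type*) [Field F] [CharZero F] (n : ℤ) (N : ℕ) (hN : 1 ≤ N)
    (u : ℕ → F) (huN : u N ≠ 0) (ε : F) (hε : ε ^ 2 = 1)
    (x : ℤ → LaurentSeries F) (hsol : IsSolSD x)
    (hnopole : ∀ k, k ≠ n → BigO (x k) 0)
    (hpole : BigO (x n) (-1)) (hlead : (x n).coeff (-1) = -ε / 2)
    (hxp : (x (n + 1)).coeff 0 = -ε) (hxm : (x (n - 1)).coeff 0 = ε)
    (ha : ∀ k, 2 ≤ |k - n| → ((x k).coeff 0) ^ 2 ≠ 1)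
    (ut : ℕ → LaurentSeries F)
    (hut : ∀ i, ut i = HahnSeries.C (u i) +
      (if i = 1 then HahnSeries.single (1 : ℤ) (1 : F) else 0))
    (G : ℤ → LaurentSeries F) (hG : ∀ k, G k = GamSD N ut x k) :
    -- (i) Γ_k(t) = Γ_k^{(0)} + O(t) for k ≠ n, and
    --     Γ_n(t) = (Γ_{n+1}^{(0)} - Γ_{n-1}^{(0)})/(4t) + Γ_n^{(0)} + O(t):
    ((∀ k, k ≠ n → BigO (G k) 0) ∧
      BigO (G n) (-1) ∧
      (G n).coeff (-1) = ((G (n + 1)).coeff 0 - (G (n - 1)).coeff 0) / 4) ∧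
    -- (ii) if all constant terms vanish then Γ_k(t) = 0 identically:
    ((∀ k, (G k).coeff 0 = 0) → ∀ k, G k = 0) := by
  have hdx : ∀ k, dd (x k) = (1 - x k * x k) * (x (k + 1) - x (k - 1)) := by
    intro k
    ext m
    rw [dd_coeff, hsol k m]
  have hdC : ∀ c : F, dd (HahnSeries.C c : LaurentSeries F) = 0 := by
    intro c
    ext m
    rw [dd_coeff, HahnSeries.C_apply, HahnSeries.coeff_zero]
    rcases eq_or_ne (m + 1) 0 with h | h
    · rw [h]; simp
    · rw [HahnSeries.coeff_single_of_ne h, mul_zero]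
  have hdu : ∀ i, dd (ut i) = if i = 1 then 1 else 0 := by
    intro i
    rw [hut, map_add, hdC, zero_add]
    split_ifs
    · ext m
      rw [dd_coeff, HahnSeries.coeff_one]
      rcases eq_or_ne m 0 with h | h
      · subst h; simp
      · rw [HahnSeries.coeff_single_of_ne (by omega), mul_zero, if_neg h]
    · exact map_zero _
  have hbu : ∀ i, BigO (ut i) 0 := by
    intro i
    rw [hut]
    refine bo_add (bo_C _) ?_
    split_ifs
    · intro j hj
      rw [HahnSeries.coeff_single_of_ne (by omega)]
    · exact bo_zero 0
  have ode : ∀ k, dd (G k) = (1 - x k * x k) * (G (k + 1) - G (k - 1)) := by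
    intro k
    rw [hG, hG, hG]
    exact D_Gam dd dd_mul x hdx N hN ut hdu (fun k => by rw [int_C, hdC]) k
  have hv : ∀ k, k ≠ n → BigO (1 - x k * x k) 0 := fun k hk =>
    bo_sub bo_one (bo_mul0 (hnopole k hk) (hnopole k hk))
  have hv0 : ∀ k, k ≠ n → (1 - x k * x k).coeff 0 = 1 - (x k).coeff 0 ^ 2 := by
    intro k hk
    have := bo_lead (hnopole k hk) (hnopole k hk)
    rw [add_zero] at this
    rw [HahnSeries.coeff_sub, this, HahnSeries.coeff_one, if_pos rfl, sq]
  have hfar : ∀ k : ℤ, k < n - N ∨ n + N < k → BigO (G k) 0 := by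
    intro k hk
    rw [hG]
    exact bo_Gam x N ut hbu k fun m h1 h2 => hnopole m (by omega)
  have hunit : ∀ k, 2 ≤ |k - n| → BigO (dd (G k)) 0 → BigO (G (k + 1) - G (k - 1)) 0 := by
    intro k hk h
    have hkn : k ≠ n := by rintro rfl; simp at hk
    rw [ode] at h
    refine bo_div (hv k hkn) ?_ h
    rw [hv0 k hkn]
    intro h0
    exact ha k hk (sub_eq_zero.1 h0).symm
  have hleft : ∀ k, k < n → BigO (G k) 0 := by
    intro k
    refine (up_ind (fun k => (k < n → BigO (G k) 0) ∧ (k - 1 < n → BigO (G (k - 1)) 0)) (n - N - 1)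
      ?_ ?_ k).1
    · intro k hk
      exact ⟨fun _ => hfar _ (by omega), fun _ => hfar _ (by omega)⟩
    · intro k ⟨h1, h2⟩
      refine ⟨fun hk => ?_, fun hk => h1 hk⟩
      have g1 := h1 (by omega)
      have g2 := h2 (by omega)
      have := hunit (k - 1) (by rw [abs_of_neg (by omega)]; omega) (bo_dd g1)
      have := bo_add this g2
      simpa using this
  have hright : ∀ k, n < k → BigO (G k) 0 := by
    intro k
    refine (down_ind (fun k => (n < k → BigO (G k) 0) ∧ (n < k + 1 → BigO (G (k + 1)) 0))
      (n + N + 1) ?_ ?_ k).1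
    · intro k hk
      exact ⟨fun _ => hfar _ (by omega), fun _ => hfar _ (by omega)⟩
    · intro k ⟨h1, h2⟩
      refine ⟨fun hk => ?_, fun hk => h1 hk⟩
      have g1 := h1 (by omega)
      have g2 := h2 (by omega)
      have := hunit (k + 1) (by rw [abs_of_pos (by omega)]; omega) (bo_dd g1)
      have := bo_sub g2 this
      simpa using this
  have hreg : ∀ k, k ≠ n → BigO (G k) 0 := fun k hk =>
    (lt_or_gt_of_ne hk).elim (hleft k) (hright k)
  have hvn : BigO (1 - x n * x n) (-2) :=
    bo_sub (bo_mono bo_one (by omega)) (bo_mul hpole hpole)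
  have hvnc : (1 - x n * x n).coeff (-2) = -(1 / 4) := by
    have := bo_lead hpole hpole
    norm_num at this
    rw [HahnSeries.coeff_sub, this, hlead, HahnSeries.coeff_one, if_neg (by omega)]
    linear_combination (-1 / 4) * hε
  have hdiff : BigO (G (n + 1) - G (n - 1)) 0 :=
    bo_sub (hreg _ (by omega)) (hreg _ (by omega))
  have hdG : BigO (dd (G n)) (-2) := by
    rw [ode]
    exact bo_mul hvn hdiff
  have hGn : BigO (G n) (-1) := bo_of_dd hdG (by omega) (fun i h1 h2 => by omega)
  have hGc : (G n).coeff (-1) = ((G (n + 1)).coeff 0 - (G (n - 1)).coeff 0) / 4 := by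
    have h1 := bo_lead hvn hdiff
    rw [add_zero, ← ode, dd_coeff, hvnc, HahnSeries.coeff_sub] at h1
    norm_num at h1
    linear_combination h1
  refine ⟨⟨hreg, hGn, hGc⟩, ?_⟩
  intro h0
  have hv1 : ∀ k, k = n + 1 ∨ k = n - 1 → BigO (1 - x k * x k) 1 := by
    intro k hk
    have hkn : k ≠ n := by omega
    refine bo_succ (hv k hkn) ?_
    rw [hv0 k hkn]
    rcases hk with rfl | rfl
    · rw [hxp]; linear_combination -hε
    · rw [hxm]; linear_combination -hε
  have hall : ∀ m : ℕ, ∀ k, BigO (G k) (m + 1) := by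
    intro m
    induction m with
    | zero =>
      intro k
      simp only [Nat.cast_zero]
      refine bo_succ ?_ (h0 k)
      rcases eq_or_ne k n with rfl | hk
      · refine bo_succ hGn ?_
        rw [hGc, h0, h0]; simp
      · exact hreg k hk
    | succ m ih =>
      have hsub : ∀ k, BigO (G (k + 1) - G (k - 1)) (m + 1) := fun k => bo_sub (ih _) (ih _)
      have hpm : ∀ k, k = n + 1 ∨ k = n - 1 → BigO (G k) (m + 3) := by
        intro k hk
        have := bo_mul (hv1 k hk) (hsub k)
        rw [← ode] at this
        exact bo_of_dd this (by omega) (fun i _ hi => by rw [hi, h0])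
      intro k
      push_cast
      rcases eq_or_ne k n with rfl | hk
      · have := bo_mul hvn (bo_sub (hpm _ (Or.inl rfl)) (hpm _ (Or.inr rfl)))
        rw [← ode] at this
        exact bo_of_dd this (by omega) (fun i _ hi => by rw [hi, h0])
      · have := bo_mul (hv k hk) (hsub k)
        rw [← ode] at this
        exact bo_of_dd this (by omega) (fun i _ hi => by rw [hi, h0])
  intro k
  ext m
  rw [HahnSeries.coeff_zero]
  exact hall m.toNat k m (by omega)
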